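/- Let g : ℝ^n → ℝ^m be continuously differentiable and suppose the derivative D(u) := Dg(u) : ℝ^n → ℝ^m is surjective for every u in the zero set of g. Let f : ℝ^n → ℝ^n be continuous, and let u : ℝ → ℝ^n be a differentiable curve satisfying g(u(0)) = 0 and, for all t ≥ 0, the projected differential equation u'(t) = f(u(t)) − D(u(t))* [ (D(u(t)) ∘ D(u(t))*)⁻¹ [ D(u(t))[f(u(t))] ] ], where D(u)* denotes the adjoint of D(u) with respect to the Euclidean inner products. Then g(u(t)) = 0 for all t ≥ 0. -/

import Mathlib

open ContinuousLinearMap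

/-!
Along a solution on `{g = 0}` the projected velocity lies in `ker Dg(u)`, so `g ∘ u` has zero
derivative. A priori this is only known while the solution is on the manifold. It propagates because
surjectivity of `Dg` is an open condition: the formula still projects onto `ker Dg(u)` for points
`u` near the manifold, so `g ∘ u` remains constant a little longer, and continuous induction
concludes.
-/

section KernelProjection

open scoped InnerProduct InnerProductSpace

variable {𝕜 E F : Type*} [RCLike 𝕜]
  [NormedAddCommGroup E] [InnerProductSpace 𝕜 E] [CompleteSpace E]
  [NormedAddCommGroup F] [InnerProductSpace 𝕜 F] [CompleteSpace F]

theorem exists_norm_le_mul_norm_adjoint_apply_of_surjective {A : E →L[𝕜] F}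
    (hA : Function.Surjective A) : ∃ C > 0, ∀ y, ‖y‖ ≤ C * ‖(A†) y‖ := by
  obtain ⟨C, hC, hpre⟩ := A.exists_preimage_norm_le hA
  refine ⟨C, hC, fun y ↦ ?_⟩
  obtain ⟨x, hx, hxy⟩ := hpre y
  have hsq : ‖y‖ * ‖y‖ ≤ C * ‖(A†) y‖ * ‖y‖ :=
    calc ‖y‖ * ‖y‖ = ‖⟪(A†) y, x⟫_𝕜‖ := by
          rw [adjoint_inner_left, hx, inner_self_eq_norm_sq_to_K, norm_pow, RCLike.norm_ofReal,
            abs_norm, sq]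
      _ ≤ ‖(A†) y‖ * ‖x‖ := norm_inner_le_norm _ _
      _ ≤ ‖(A†) y‖ * (C * ‖y‖) := by gcongr
      _ = C * ‖(A†) y‖ * ‖y‖ := by ring
  rcases (norm_nonneg y).eq_or_lt with hy | hy
  · rw [← hy]
    positivity
  · exact le_of_mul_le_mul_right hsq hy

theorem isInvertible_comp_adjoint_iff_surjective {A : E →L[𝕜] F} :
    (A ∘L A†).IsInvertible ↔ Function.Surjective A := by
  refine ⟨fun h ↦ Function.Surjective.of_comp (g := A†) h.surjective, fun hA ↦ ?_⟩
  obtain ⟨C, hC, hbound⟩ := exists_norm_le_mul_norm_adjoint_apply_of_surjective hA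
  have hcoercive (y : F) : ‖y‖ ^ 2 * (C ^ 2)⁻¹ ≤ ‖⟪(A ∘L A†) y, y⟫_𝕜‖ :=
    calc ‖y‖ ^ 2 * (C ^ 2)⁻¹ ≤ (C * ‖(A†) y‖) ^ 2 * (C ^ 2)⁻¹ := by gcongr; exact hbound y
      _ = ‖(A†) y‖ ^ 2 := by field_simp
      _ = ‖⟪(A ∘L A†) y, y⟫_𝕜‖ := by
          rw [comp_apply, ← adjoint_inner_right, inner_self_eq_norm_sq_to_K, norm_pow,
            RCLike.norm_ofReal, abs_norm]
  have hunit : IsUnit (A ∘L A†) :=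
    isUnit_of_forall_le_norm_inner_map _ (c := ⟨(C ^ 2)⁻¹, by positivity⟩)
      (show 0 < (C ^ 2)⁻¹ by positivity) hcoercive
  obtain ⟨e, he⟩ := hunit
  exact ⟨ContinuousLinearEquiv.ofUnit e, he⟩

theorem isOpen_setOf_surjective_continuousLinearMap :
    IsOpen {A : E →L[𝕜] F | Function.Surjective A} := by
  have hcont : Continuous fun A : E →L[𝕜] F ↦ A ∘L A† :=
    continuous_id.clm_comp adjoint.continuous
  simp only [← isInvertible_comp_adjoint_iff_surjective]
  exact (ContinuousLinearEquiv.isOpen (𝕜 := 𝕜) (E := F) (F := F)).preimage hcont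

/-- The operator `v ↦ v - A† (A A†)⁻¹ A v`, which for surjective `A` is the orthogonal projection
onto `ker A`; with `A = Dg(u)` it is the projection `Proj_u` of the paper. The inverse is
`ContinuousLinearMap.inverse`, so the operator is the identity when `A A†` is not invertible. -/
noncomputable def kerProjection (A : E →L[𝕜] F) : E →L[𝕜] E :=
  .id 𝕜 E - A† ∘L (A ∘L A†).inverse ∘L A

theorem apply_kerProjection {A : E →L[𝕜] F} (hA : Function.Surjective A) (v : E) :
    A (kerProjection A v) = 0 := by
  have hinv := (isInvertible_comp_adjoint_iff_surjective.mpr hA).self_apply_inverse (A v)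
  simpa only [kerProjection, sub_apply, id_apply, comp_apply, map_sub, sub_eq_zero]
    using hinv.symm

end KernelProjection

section Invariance

open Set Filter
open scoped Topology

theorem eq_left_of_eventually_hasDerivWithinAt_zero {F : Type*} [NormedAddCommGroup F]
    [NormedSpace ℝ F] {h : ℝ → F} {a b : ℝ} (hcont : ContinuousOn h (Icc a b))
    (hderiv : ∀ t ∈ Ico a b, h t = h a → ∀ᶠ r in 𝓝[≥] t, HasDerivWithinAt h 0 (Ici r) r) :
    ∀ t ∈ Icc a b, h t = h a := by
  intro t ht
  have hclosed : IsClosed ({s | h s = h a} ∩ Icc a b) := by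
    rw [inter_comm]
    exact hcont.preimage_isClosed_of_isClosed isClosed_Icc isClosed_singleton
  refine hclosed.Icc_subset_of_forall_mem_nhdsWithin rfl ?_ ht
  rintro s ⟨hs, hsab⟩
  obtain ⟨c, hsc, hc⟩ := (mem_nhdsGE_iff_exists_Ico_subset' hsab.2).mp (hderiv s hsab hs)
  filter_upwards [Ioo_mem_nhdsGT (lt_min hsc hsab.2)] with r hr
  have hrc : r < c := hr.2.trans_le (min_le_left _ _)
  have hrb : r ≤ b := (hr.2.trans_le (min_le_right _ _)).le
  have hconst := constant_of_has_deriv_right_zero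
    (hcont.mono (Icc_subset_Icc hsab.1 hrb))
    (fun q hq ↦ hc ⟨hq.1, hq.2.trans hrc⟩) r ⟨hr.1.le, le_rfl⟩
  exact hconst.trans hs

variable {E F : Type*}
  [NormedAddCommGroup E] [InnerProductSpace ℝ E] [CompleteSpace E]
  [NormedAddCommGroup F] [InnerProductSpace ℝ F] [CompleteSpace F]

theorem pnde_explicit_projection_stays_on_manifold_general {g : E → F} (hg : ContDiff ℝ 1 g)
    (hsurj : ∀ x, g x = 0 → Function.Surjective (fderiv ℝ g x))
    (f : ℝ → E → E) {u : ℝ → E} {a b : ℝ} (hu : ContinuousOn u (Icc a b)) (ha : g (u a) = 0)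
    (hode : ∀ t ∈ Ico a b,
      HasDerivWithinAt u (kerProjection (fderiv ℝ g (u t)) (f t (u t))) (Ici t) t) :
    ∀ t ∈ Icc a b, g (u t) = 0 := by
  suffices hconst : ∀ t ∈ Icc a b, g (u t) = g (u a) by simpa only [ha] using hconst
  refine eq_left_of_eventually_hasDerivWithinAt_zero (hg.continuous.comp_continuousOn hu)
    fun t ht hgt ↦ ?_
  have hDu : ContinuousWithinAt (fun r ↦ fderiv ℝ g (u r)) (Ici t) t :=
    (hg.continuous_fderiv one_ne_zero).continuousAt.comp_continuousWithinAt
      (hode t ht).continuousWithinAt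
  have hsurj_near : ∀ᶠ r in 𝓝[≥] t, Function.Surjective (fderiv ℝ g (u r)) :=
    hDu.eventually_mem (isOpen_setOf_surjective_continuousLinearMap.mem_nhds
      (hsurj _ (hgt.trans ha)))
  filter_upwards [hsurj_near, Ico_mem_nhdsGE ht.2] with r hr hrt
  have hgr : HasFDerivAt g (fderiv ℝ g (u r)) (u r) :=
    (hg.differentiable one_ne_zero (u r)).hasFDerivAt
  have hchain := hgr.comp_hasDerivWithinAt r (hode r ⟨ht.1.trans hrt.1, hrt.2⟩)
  rwa [apply_kerProjection hr] at hchain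

end Invariance

/-- Solutions of the projected neural differential equation
`u' = f(u) − Dg(u)* [(Dg(u) ∘ Dg(u)*)⁻¹ [Dg(u)[f(u)]]]` starting on the
constraint manifold `{u ; g u = 0}` remain on it for all `t ≥ 0`. -/
theorem pnde_explicit_projection_stays_on_manifold
    {n m : ℕ}
    (g : EuclideanSpace ℝ (Fin n) → EuclideanSpace ℝ (Fin m))
    (hg : ContDiff ℝ 1 g)
    (D : EuclideanSpace ℝ (Fin n) → EuclideanSpace ℝ (Fin n) →L[ℝ] EuclideanSpace ℝ (Fin m))
    (hD : ∀ x, D x = fderiv ℝ g x)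
    (hsurj : ∀ x, g x = 0 → Function.Surjective (D x))
    (f : EuclideanSpace ℝ (Fin n) → EuclideanSpace ℝ (Fin n))
    (hf : Continuous f)
    (u : ℝ → EuclideanSpace ℝ (Fin n)) (hu : Differentiable ℝ u)
    (h0 : g (u 0) = 0)
    (hode : ∀ t : ℝ, 0 ≤ t →
      deriv u t = f (u t) -
        adjoint (D (u t))
          (((D (u t)).comp (adjoint (D (u t)))).inverse ((D (u t)) (f (u t))))) :
    ∀ t : ℝ, 0 ≤ t → g (u t) = 0 := by
  obtain rfl : D = fderiv ℝ g := funext hD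
  exact fun t ht ↦ pnde_explicit_projection_stays_on_manifold_general hg hsurj (fun _ ↦ f)
    hu.continuous.continuousOn h0
    (fun s hs ↦ ((hu s).hasDerivAt.congr_deriv (hode s hs.1)).hasDerivWithinAt) t ⟨ht, le_rfl⟩
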